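/- Under hypotheses H(M), H(F), H(G), H(γ), H(Ψ), E ∈ X*, the smallness condition c_F > c_G‖γ‖^p, and assuming additionally that F is strictly monotone (so that the solution map S of Problem 2 is single-valued), there exists a constant c₀ > 0 such that ‖S(z,ξ)‖_X ≤ c₀ for every z ∈ K with ‖z‖_X ≤ c₀ and every ξ ∈ G(γz). -/

import Mathlib

open Filter Topology Bornology Set

noncomputable section

/-- Weak convergence of a sequence in a normed space: convergence tested
against every continuous linear functional. -/
def WeakConv {V : Type*} [NormedAddCommGroup V] [NormedSpace ℝ V]
    (x : ℕ → V) (x₀ : V) : Prop :=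
  ∀ f : V →L[ℝ] ℝ, Tendsto (fun n => f (x n)) atTop (𝓝 (f x₀))

/-- Weak-star convergence of a sequence of continuous linear functionals
(which coincides with weak convergence when the underlying space is reflexive). -/
def WeakStarConv {V : Type*} [NormedAddCommGroup V] [NormedSpace ℝ V]
    (f : ℕ → V →L[ℝ] ℝ) (f₀ : V →L[ℝ] ℝ) : Prop :=
  ∀ v : V, Tendsto (fun n => f n v) atTop (𝓝 (f₀ v))

/-- Reflexivity of a real normed space, expressed via surjectivity of the
canonical embedding into the double dual. -/
def IsReflexiveSpace (V : Type*) [NormedAddCommGroup V] [NormedSpace ℝ V] : Prop :=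
  Function.Surjective ⇑(NormedSpace.inclusionInDoubleDual ℝ V)

/-- Clarke generalized directional derivative of `J` at `u` in direction `v`. -/
def clarkeDD {V : Type*} [NormedAddCommGroup V] [NormedSpace ℝ V]
    (J : V → ℝ) (u v : V) : ℝ :=
  limsup (fun q : V × ℝ => (J (q.1 + q.2 • v) - J q.1) / q.2)
    ((𝓝 u) ×ˢ (𝓝[>] (0 : ℝ)))

/-- Clarke generalized subdifferential of `J` at `u`. -/
def clarkeSub {V : Type*} [NormedAddCommGroup V] [NormedSpace ℝ V]
    (J : V → ℝ) (u : V) : Set (V →L[ℝ] ℝ) :=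
  {g | ∀ v : V, g v ≤ clarkeDD J u v}

/-- The data of the evolution multivalued quasi-variational inequality:
spaces `X`, `Y`, the (unbounded) operator `L` with domain `DL`, the constraint
set `K`, the constraint map `M`, the operator `F`, the multivalued map `G`,
the trace operator `gam`, the bifunction `Psi`, the right-hand side `E`, and
the constants appearing in the hypotheses. -/
structure QVISetting (X Y : Type*) [NormedAddCommGroup X] [NormedSpace ℝ X]
    [NormedAddCommGroup Y] [NormedSpace ℝ Y] where
  DL : Set X
  L : X → X →L[ℝ] ℝ
  K : Set X
  M : X → Set X
  F : X → X →L[ℝ] ℝ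
  G : Y → Set (Y →L[ℝ] ℝ)
  gam : X →L[ℝ] Y
  Psi : X → X → ℝ
  E : X →L[ℝ] ℝ
  p : ℝ
  cF : ℝ
  dF : ℝ
  cG : ℝ
  dG : ℝ
  cPsi : ℝ
  dPsi : ℝ
  ePsi : ℝ
  beta : ℝ

namespace QVISetting

variable {X Y : Type*} [NormedAddCommGroup X] [NormedSpace ℝ X]
  [NormedAddCommGroup Y] [NormedSpace ℝ Y] (S : QVISetting X Y)

/-- Weak convergence in `W = D(L)` equipped with the graph norm:
weak convergence in `X` together with weak convergence of `L xₙ` in `X*`. -/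
def WConvW (x : ℕ → X) (x₀ : X) : Prop :=
  WeakConv x x₀ ∧ WeakStarConv (fun n => S.L (x n)) (S.L x₀)

/-- H(L): `L` is linear on its domain `DL`, densely defined, monotone, and
maximal monotone. -/
def HL : Prop :=
  (0 : X) ∈ S.DL ∧
  (∀ a ∈ S.DL, ∀ b ∈ S.DL, ∀ s t : ℝ,
      s • a + t • b ∈ S.DL ∧ S.L (s • a + t • b) = s • S.L a + t • S.L b) ∧
  Dense S.DL ∧
  (∀ u ∈ S.DL, ∀ v ∈ S.DL, 0 ≤ (S.L u - S.L v) (u - v)) ∧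
  (∀ (x : X) (xs : X →L[ℝ] ℝ),
      (∀ v ∈ S.DL, 0 ≤ (xs - S.L v) (x - v)) → x ∈ S.DL ∧ xs = S.L x)

/-- H(K): `K` is nonempty, closed and convex. -/
def HK : Prop := S.K.Nonempty ∧ IsClosed S.K ∧ Convex ℝ S.K

/-- H(M): `M` has nonempty closed convex values contained in `K`; `0` lies in
the norm-interior of `⋂_{w ∈ K} M w`; `M` has a weakly closed graph with
respect to `L`; and the Mosco-type approximation property holds. -/
def HM : Prop :=
  (∀ z ∈ S.K, (S.M z).Nonempty ∧ IsClosed (S.M z) ∧ Convex ℝ (S.M z) ∧ S.M z ⊆ S.K) ∧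
  (0 : X) ∈ interior (⋂ w ∈ S.K, S.M w) ∧
  (∀ (y x : ℕ → X) (y₀ x₀ : X), (∀ n, y n ∈ S.K) →
      (∀ n, x n ∈ S.M (y n) ∩ S.DL) →
      S.WConvW y y₀ → S.WConvW x x₀ → x₀ ∈ S.M y₀ ∩ S.DL) ∧
  (∀ (y : ℕ → X) (y₀ : X), (∀ n, y n ∈ S.K) → S.WConvW y y₀ →
      ∀ x₀ ∈ S.M y₀ ∩ S.DL, ∃ x : ℕ → X,
        (∀ n, x n ∈ S.M (y n) ∩ S.DL) ∧ Tendsto x atTop (𝓝 x₀))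

/-- H(F): `F` is bounded, monotone, hemicontinuous and `p`-coercive. -/
def HF : Prop :=
  (∀ B : Set X, IsBounded B → IsBounded (S.F '' B)) ∧
  (∀ u v : X, 0 ≤ (S.F u - S.F v) (u - v)) ∧
  (∀ u v w : X, Tendsto (fun t : ℝ => S.F (u + t • v) w) (𝓝 0) (𝓝 (S.F u w))) ∧
  1 < S.p ∧ 0 < S.cF ∧ 0 ≤ S.dF ∧
  (∀ x : X, S.cF * ‖x‖ ^ S.p - S.dF ≤ S.F x x)

/-- H(G): `G` has nonempty closed convex values, sequentially strongly–weakly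
closed graph, and satisfies the `(p-1)`-growth condition. -/
def HG : Prop :=
  (∀ z : Y, (S.G z).Nonempty ∧ IsClosed (S.G z) ∧ Convex ℝ (S.G z)) ∧
  (∀ (z : ℕ → Y) (z₀ : Y) (ξ : ℕ → Y →L[ℝ] ℝ) (ξ₀ : Y →L[ℝ] ℝ),
      Tendsto z atTop (𝓝 z₀) → (∀ n, ξ n ∈ S.G (z n)) →
      WeakStarConv ξ ξ₀ → ξ₀ ∈ S.G z₀) ∧
  0 ≤ S.cG ∧ 0 ≤ S.dG ∧
  (∀ z : Y, ∀ ξ ∈ S.G z, ‖ξ‖ ≤ S.cG * ‖z‖ ^ (S.p - 1) + S.dG)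

/-- H(γ): `gam` is compact on `W`: it maps weakly convergent sequences in `W`
to strongly convergent sequences in `Y`. -/
def Hgam : Prop :=
  ∀ (x : ℕ → X) (x₀ : X), S.WConvW x x₀ →
    Tendsto (fun n => S.gam (x n)) atTop (𝓝 (S.gam x₀))

/-- H(Ψ): conditions (i)–(iv) on the bifunction `Psi`. -/
def HPsi : Prop :=
  (∀ x : X, ConvexOn ℝ Set.univ (S.Psi x) ∧ LowerSemicontinuous (S.Psi x)) ∧
  (∃ (η : ℝ) (b : X → X → X → ℝ), 0 < η ∧ η < S.p ∧
    (∀ a u v : X, 0 ≤ b a u v) ∧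
    (∀ A B C : Set X, IsBounded A → IsBounded B → IsBounded C →
        ∃ Cb : ℝ, ∀ a ∈ A, ∀ u ∈ B, ∀ v ∈ C, b a u v ≤ Cb) ∧
    (∀ x y₁ y₂ : X, S.Psi x y₁ - S.Psi x y₂ ≤ b x y₁ y₂ * ‖y₁ - y₂‖ ^ η) ∧
    (∀ B : Set X, IsBounded B → ∀ ε > (0 : ℝ), ∃ R : ℝ, ∀ z ∈ B, ∀ x : X,
        R ≤ ‖x‖ → b z 0 x / ‖x‖ ^ (S.p - η) ≤ ε)) ∧
  (∀ (w x y : ℕ → X) (w₀ x₀ y₀ : X),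
      S.WConvW w w₀ → S.WConvW x x₀ → Tendsto y atTop (𝓝 y₀) →
      limsup (fun n => S.Psi (w n) (y n) - S.Psi (w n) (x n)) atTop ≤
        S.Psi w₀ y₀ - S.Psi w₀ x₀) ∧
  (∀ v : X, ∃ g : X →L[ℝ] ℝ, ∀ y : X, S.Psi v 0 + g y ≤ S.Psi v y) ∧
  (0 ≤ S.ePsi ∧ ∀ v : X, |S.Psi v 0| ≤ S.ePsi) ∧
  (0 ≤ S.cPsi ∧ 0 ≤ S.dPsi ∧ 1 ≤ S.beta ∧ S.beta < S.p ∧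
    ∀ v y : X, -S.cPsi * ‖y‖ ^ S.beta - S.dPsi ≤ S.Psi v y)

/-- The `(S₊)`-property of `F` with respect to `L`. -/
def SPlus : Prop :=
  ∀ (x : ℕ → X) (x₀ : X), S.WConvW x x₀ →
    limsup (fun n => S.F (x n) (x n - x₀)) atTop ≤ 0 →
    Tendsto x atTop (𝓝 x₀)

/-- Strict monotonicity of `F`. -/
def StrictlyMonotoneF : Prop :=
  ∀ u v : X, u ≠ v → 0 < (S.F u - S.F v) (u - v)

/-- Solution set of Problem 1. -/
def Sol1 : Set X :=
  {x | x ∈ S.M x ∩ S.DL ∧ ∃ ξ ∈ S.G (S.gam x), ∀ y ∈ S.M x ∩ S.DL,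
      S.Psi x x - S.Psi x y ≤
        S.L x (y - x) + S.F x (y - x) - S.E (y - x) + ξ (S.gam (y - x))}

/-- Solution set of Problem 2 with parameters `(z, ξ)`. -/
def Sol2 (z : X) (ξ : Y →L[ℝ] ℝ) : Set X :=
  {x | x ∈ S.M z ∩ S.DL ∧ ∀ y ∈ S.M z ∩ S.DL,
      S.Psi z x - S.Psi z y ≤
        S.L x (y - x) + S.F x (y - x) - S.E (y - x) + ξ (S.gam (y - x))}

/-- Solution set of Problem 3 (with `G = ∂_C J ∘ γ`). -/
def Sol3 (J : Y → ℝ) : Set X :=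
  {x | x ∈ S.M x ∩ S.DL ∧ ∃ ξ ∈ clarkeSub J (S.gam x), ∀ y ∈ S.M x ∩ S.DL,
      S.Psi x x - S.Psi x y ≤
        S.L x (y - x) + S.F x (y - x) - S.E (y - x) + ξ (S.gam (y - x))}

/-- Solution set of Problem 4 (quasi-variational–hemivariational inequality). -/
def Sol4 (J : Y → ℝ) : Set X :=
  {x | x ∈ S.M x ∩ S.DL ∧ ∀ y ∈ S.M x ∩ S.DL,
      S.Psi x x - S.Psi x y ≤
        S.L x (y - x) + S.F x (y - x) - S.E (y - x) +
          clarkeDD J (S.gam x) (S.gam (y - x))}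

/-- Solution set of Problem 5 with a real-valued convex function `Φ`
independent of the first variable. -/
def Sol5 (Φ : X → ℝ) : Set X :=
  {x | x ∈ S.M x ∩ S.DL ∧ ∃ ξ ∈ S.G (S.gam x), ∀ y ∈ S.M x ∩ S.DL,
      Φ x - Φ y ≤
        S.L x (y - x) + S.F x (y - x) - S.E (y - x) + ξ (S.gam (y - x))}

/-- Solution set of Problem 5 with an extended-real-valued function `Φ`. -/
def Sol5E (Φ : X → EReal) : Set X :=
  {x | x ∈ S.M x ∩ S.DL ∧ ∃ ξ ∈ S.G (S.gam x), ∀ y ∈ S.M x ∩ S.DL,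
      Φ x ≤
        ((S.L x (y - x) + S.F x (y - x) - S.E (y - x) + ξ (S.gam (y - x)) : ℝ) : EReal)
          + Φ y}

/-- Sequential weak compactness of a set in `W`. -/
def SeqWeakCompactW (A : Set X) : Prop :=
  ∀ x : ℕ → X, (∀ n, x n ∈ A) →
    ∃ x₀ ∈ A, ∃ φ : ℕ → ℕ, StrictMono φ ∧ S.WConvW (x ∘ φ) x₀

end QVISetting

/-!
Testing the inequality with `y = 0` and discarding the unbounded operator by monotonicity leaves an
energy estimate in which coercivity of `F` contributes `c_F ‖x‖ ^ p`. If a solution `x` were longer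
than `z`, the growth of `G` would cost at most `c_G ‖γ‖ ^ p ‖x‖ ^ p` plus a linear term in `‖x‖`. By
smallness a positive multiple of `‖x‖ ^ p` is then dominated by powers of exponent less than `p`,
which is impossible once `‖x‖` is large.
-/

theorem isLittleO_rpow_rpow_atTop {a b : ℝ} (hab : a < b) :
    (fun t : ℝ => t ^ a) =o[atTop] (fun t : ℝ => t ^ b) := by
  rw [Asymptotics.isLittleO_iff_tendsto']
  · refine (tendsto_rpow_neg_atTop (sub_pos.2 hab)).congr' ?_
    filter_upwards [eventually_gt_atTop 0] with t ht
    rw [← Real.rpow_sub ht, neg_sub]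
  · filter_upwards [eventually_gt_atTop 0] with t ht h
    exact absurd h (Real.rpow_pos_of_pos ht b).ne'

theorem eventually_linear_add_rpow_lt_const_mul_rpow {p β δ : ℝ} (hp : 1 < p) (hβ : β < p)
    (hδ : 0 < δ) (a b c : ℝ) : ∀ᶠ t : ℝ in atTop, a * t + b * t ^ β + c < δ * t ^ p := by
  have hlin : (fun t : ℝ => t) =o[atTop] (fun t : ℝ => t ^ p) := by
    simpa only [Real.rpow_one] using isLittleO_rpow_rpow_atTop hp
  have hconst : (fun _ : ℝ => c) =o[atTop] (fun t : ℝ => t ^ p) :=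
    Asymptotics.isLittleO_const_left.2 <| .inr <|
      tendsto_norm_atTop_atTop.comp (tendsto_rpow_atTop (one_pos.trans hp))
  have hlower : (fun t : ℝ => a * t + b * t ^ β + c) =o[atTop] (fun t : ℝ => δ * t ^ p) :=
    (((hlin.const_mul_left a).add ((isLittleO_rpow_rpow_atTop hβ).const_mul_left b)).add
      hconst).const_mul_right hδ.ne'
  have hpos : ∀ᶠ t : ℝ in atTop, 0 < δ * t ^ p := by
    filter_upwards [eventually_gt_atTop 0] with t ht
    exact mul_pos hδ (Real.rpow_pos_of_pos ht p)
  filter_upwards [hpos, hlower.eventuallyLT_norm_of_eventually_pos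
    (hpos.mono fun t ht => norm_pos_iff.2 ht.ne')] with t ht hlt
  rw [Real.norm_of_nonneg ht.le] at hlt
  exact (le_abs_self _).trans_lt hlt

section GrowthBounds

variable {𝕜 V W Z : Type*} [NontriviallyNormedField 𝕜] [SeminormedAddCommGroup V]
  [NormedSpace 𝕜 V] [SeminormedAddCommGroup W] [NormedSpace 𝕜 W] {p : ℝ} {v x : V}

theorem norm_apply_rpow_mul_opNorm_mul_norm_le (T : V →L[𝕜] W) (hp : 1 ≤ p)
    (hvx : ‖v‖ ≤ ‖x‖) : ‖T v‖ ^ (p - 1) * (‖T‖ * ‖x‖) ≤ ‖T‖ ^ p * ‖x‖ ^ p :=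
  calc ‖T v‖ ^ (p - 1) * (‖T‖ * ‖x‖)
      ≤ (‖T‖ * ‖x‖) ^ (p - 1) * (‖T‖ * ‖x‖) := by
        gcongr
        exact T.le_opNorm_of_le hvx
    _ = (‖T‖ * ‖x‖) ^ p := by
        rw [← Real.rpow_add_one' (by positivity) (by linarith), sub_add_cancel]
    _ = ‖T‖ ^ p * ‖x‖ ^ p := Real.mul_rpow (norm_nonneg _) (norm_nonneg _)

variable [SeminormedAddCommGroup Z] [NormedSpace 𝕜 Z]

theorem norm_apply_apply_le_of_rpow_growth (T : V →L[𝕜] W) {f : W →L[𝕜] Z} {c d : ℝ}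
    (hp : 1 ≤ p) (hc : 0 ≤ c) (hvx : ‖v‖ ≤ ‖x‖) (hf : ‖f‖ ≤ c * ‖T v‖ ^ (p - 1) + d) :
    ‖f (T x)‖ ≤ c * ‖T‖ ^ p * ‖x‖ ^ p + d * ‖T‖ * ‖x‖ :=
  calc ‖f (T x)‖
      ≤ (c * ‖T v‖ ^ (p - 1) + d) * (‖T‖ * ‖x‖) := f.le_of_opNorm_le_of_le hf (T.le_opNorm x)
    _ = c * (‖T v‖ ^ (p - 1) * (‖T‖ * ‖x‖)) + d * ‖T‖ * ‖x‖ := by ring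
    _ ≤ c * (‖T‖ ^ p * ‖x‖ ^ p) + d * ‖T‖ * ‖x‖ := by
        gcongr c * ?_ + _
        exact norm_apply_rpow_mul_opNorm_mul_norm_le T hp hvx
    _ = c * ‖T‖ ^ p * ‖x‖ ^ p + d * ‖T‖ * ‖x‖ := by ring

end GrowthBounds

namespace QVISetting

variable {X Y : Type*} [NormedAddCommGroup X] [NormedSpace ℝ X]
  [NormedAddCommGroup Y] [NormedSpace ℝ Y] {S : QVISetting X Y} {z x : X} {ξ : Y →L[ℝ] ℝ}

theorem HL.map_zero (hL : S.HL) : S.L 0 = 0 := by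
  simpa only [zero_smul, add_zero] using (hL.2.1 0 hL.1 0 hL.1 0 0).2

theorem HL.apply_self_nonneg (hL : S.HL) (hx : x ∈ S.DL) : 0 ≤ S.L x x := by
  simpa only [hL.map_zero, sub_zero] using hL.2.2.2.1 x hx 0 hL.1

theorem HM.zero_mem (hM : S.HM) (hz : z ∈ S.K) : (0 : X) ∈ S.M z :=
  mem_iInter₂.1 (interior_subset hM.2.1) z hz

theorem energy_le_of_mem_Sol2 (h0 : (0 : X) ∈ S.M z ∩ S.DL) (hx : x ∈ S.Sol2 z ξ) :
    S.L x x + S.F x x + S.Psi z x ≤ S.E x - ξ (S.gam x) + S.Psi z 0 := by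
  have htest := hx.2 0 h0
  simp only [zero_sub, map_neg] at htest
  linarith

theorem norm_rpow_le_of_mem_Sol2 (hp : 1 ≤ S.p) (h0 : (0 : X) ∈ S.M z ∩ S.DL)
    (hL : 0 ≤ S.L x x) (hF : S.cF * ‖x‖ ^ S.p - S.dF ≤ S.F x x)
    (hcG : 0 ≤ S.cG) (hξ : ‖ξ‖ ≤ S.cG * ‖S.gam z‖ ^ (S.p - 1) + S.dG)
    (hPsi0 : S.Psi z 0 ≤ S.ePsi) (hPsi : -S.cPsi * ‖x‖ ^ S.beta - S.dPsi ≤ S.Psi z x)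
    (hzx : ‖z‖ ≤ ‖x‖) (hx : x ∈ S.Sol2 z ξ) :
    (S.cF - S.cG * ‖S.gam‖ ^ S.p) * ‖x‖ ^ S.p ≤
      (‖S.E‖ + S.dG * ‖S.gam‖) * ‖x‖ + S.cPsi * ‖x‖ ^ S.beta + (S.dF + S.dPsi + S.ePsi) := by
  have henergy := energy_le_of_mem_Sol2 h0 hx
  have hE : S.E x ≤ ‖S.E‖ * ‖x‖ := (le_abs_self _).trans (S.E.le_opNorm x)
  have hG : -ξ (S.gam x) ≤ S.cG * ‖S.gam‖ ^ S.p * ‖x‖ ^ S.p + S.dG * ‖S.gam‖ * ‖x‖ :=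
    (neg_le_abs _).trans (norm_apply_apply_le_of_rpow_growth S.gam hp hcG hzx hξ)
  linarith

end QVISetting

theorem statement4_general {X Y : Type*} [NormedAddCommGroup X] [NormedSpace ℝ X]
    [NormedAddCommGroup Y] [NormedSpace ℝ Y] (S : QVISetting X Y)
    (h0 : ∀ z ∈ S.K, (0 : X) ∈ S.M z ∩ S.DL)
    (hL : ∀ x ∈ S.DL, 0 ≤ S.L x x)
    (hp : 1 < S.p) (hF : ∀ x, S.cF * ‖x‖ ^ S.p - S.dF ≤ S.F x x)
    (hcG : 0 ≤ S.cG) (hG : ∀ z, ∀ ξ ∈ S.G z, ‖ξ‖ ≤ S.cG * ‖z‖ ^ (S.p - 1) + S.dG)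
    (hPsi0 : ∀ v, S.Psi v 0 ≤ S.ePsi)
    (hbeta : S.beta < S.p) (hPsi : ∀ v y, -S.cPsi * ‖y‖ ^ S.beta - S.dPsi ≤ S.Psi v y)
    (hsmall : S.cG * ‖S.gam‖ ^ S.p < S.cF) :
    ∀ᶠ c₀ : ℝ in atTop, ∀ z ∈ S.K, ‖z‖ ≤ c₀ → ∀ ξ ∈ S.G (S.gam z), ∀ x ∈ S.Sol2 z ξ,
      ‖x‖ ≤ c₀ := by
  have hdominated := eventually_linear_add_rpow_lt_const_mul_rpow hp hbeta (sub_pos.2 hsmall)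
    (‖S.E‖ + S.dG * ‖S.gam‖) S.cPsi (S.dF + S.dPsi + S.ePsi)
  filter_upwards [eventually_forall_ge_atTop.2 hdominated] with c₀ hc₀ z hz hzc ξ hξ x hx
  by_contra! hlt
  exact (hc₀ ‖x‖ hlt.le).not_ge <|
    QVISetting.norm_rpow_le_of_mem_Sol2 hp.le (h0 z hz) (hL x hx.1.2) (hF x)
      hcG (hG _ ξ hξ) (hPsi0 z) (hPsi z x) (hzc.trans hlt.le) hx

/-- under the hypotheses of Statement 0 and strict monotonicity
of `F`, there is a constant `c₀ > 0` such that `‖S(z, ξ)‖_X ≤ c₀` for every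
`z ∈ K` with `‖z‖_X ≤ c₀` and every `ξ ∈ G(γ z)`. -/
theorem statement4 {X Y : Type*} [NormedAddCommGroup X] [NormedSpace ℝ X]
    [NormedAddCommGroup Y] [NormedSpace ℝ Y] [CompleteSpace X] [CompleteSpace Y]
    [TopologicalSpace.SeparableSpace X] [TopologicalSpace.SeparableSpace Y]
    (hreflX : IsReflexiveSpace X) (hreflY : IsReflexiveSpace Y)
    (S : QVISetting X Y)
    (hK : S.HK) (hL : S.HL) (hM : S.HM) (hF : S.HF) (hG : S.HG)
    (hgam : S.Hgam) (hPsi : S.HPsi)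
    (hsmall : S.cG * ‖S.gam‖ ^ S.p < S.cF)
    (hstrict : S.StrictlyMonotoneF)
    (Ssol : X → (Y →L[ℝ] ℝ) → X)
    (hSsol : ∀ z ∈ S.K, ∀ ξ : Y →L[ℝ] ℝ, S.Sol2 z ξ = {Ssol z ξ}) :
    ∃ c₀ : ℝ, 0 < c₀ ∧ ∀ z ∈ S.K, ‖z‖ ≤ c₀ →
      ∀ ξ ∈ S.G (S.gam z), ‖Ssol z ξ‖ ≤ c₀ := by
  obtain ⟨-, -, -, hp, -, -, hcoercive⟩ := hF
  obtain ⟨-, -, hcG, -, hgrowth⟩ := hG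
  obtain ⟨-, -, -, -, ⟨-, hPsi0⟩, -, -, -, hbeta, hlower⟩ := hPsi
  obtain ⟨c₀, hbound, hpos⟩ := ((statement4_general S (fun z hz => ⟨hM.zero_mem hz, hL.1⟩)
    (fun x hx => hL.apply_self_nonneg hx) hp hcoercive hcG hgrowth
    (fun v => (abs_le.1 (hPsi0 v)).2) hbeta hlower hsmall).and (eventually_gt_atTop 0)).exists
  exact ⟨c₀, hpos, fun z hz hzc ξ hξ => hbound z hz hzc ξ hξ _ (hSsol z hz ξ ▸ rfl)⟩
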